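/- There exist absolute constants C, C′ with the following property. For every real H ≥ 1 and every real θ one has |ψ(θ) + Σ_{h ∈ ℤ, 0 < |h| ≤ H} e(θh)/(2πih)| ≤ C · g(θ, H), where g(θ, H) := min(1, 1/(H‖θ‖)). Moreover, for every real H ≥ 1 there exists a sequence of complex numbers (a_h)_{h ∈ ℤ} such that g(θ, H) = Σ_{h ∈ ℤ} a_h e(θh) for all real θ, with |a_h| ≤ C′ min( log(2H)/H, 1/|h|, H/h² ) for every h ≠ 0 and |a₀| ≤ C′ log(2H)/H. -/

import Mathlib

/-- `e(x) = exp(2πix)`. -/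
noncomputable def eexp (x : ℝ) : ℂ := Complex.exp (2 * Real.pi * Complex.I * x)

/-- The sawtooth function `ψ(θ) = θ - ⌊θ⌋ - 1/2`. -/
noncomputable def sawtooth (θ : ℝ) : ℝ := θ - ⌊θ⌋ - 1 / 2

/-- `‖θ‖`, the distance from `θ` to the nearest integer. -/
noncomputable def distNearestInt (θ : ℝ) : ℝ := |θ - round θ|

/-- `g(θ,H) = min(1, 1/(H‖θ‖))`, interpreted as `1` when `‖θ‖ = 0`. -/
noncomputable def gFn (θ H : ℝ) : ℝ :=
  if distNearestInt θ = 0 then 1 else min 1 (1 / (H * distNearestInt θ))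

noncomputable def sinSum (N : ℕ) (θ : ℝ) : ℝ :=
  ∑ h ∈ Finset.range N, Real.sin (2 * Real.pi * (h + 1) * θ) / (Real.pi * (h + 1))

lemma sinSum_deriv (N : ℕ) (θ : ℝ) :
    HasDerivAt (sinSum N) (∑ h ∈ Finset.range N, 2 * Real.cos (2 * Real.pi * (h + 1) * θ)) θ := by
  unfold sinSum
  refine HasDerivAt.fun_sum fun h _ => ?_
  have h1 : HasDerivAt (fun x : ℝ => 2 * Real.pi * (h + 1) * x) (2 * Real.pi * (h + 1)) θ := by
    simpa using (hasDerivAt_id θ).const_mul (2 * Real.pi * ((h : ℝ) + 1))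
  have h2 := (h1.sin).div_const (Real.pi * (h + 1))
  refine h2.congr_deriv ?_
  have : (h : ℝ) + 1 ≠ 0 := by positivity
  have := Real.pi_ne_zero
  rw [div_eq_iff (by positivity)]
  ring

lemma dirichlet_id (N : ℕ) (θ : ℝ) :
    (1 + ∑ h ∈ Finset.range N, 2 * Real.cos (2 * Real.pi * (h + 1) * θ)) * Real.sin (Real.pi * θ)
      = Real.sin ((2 * N + 1) * (Real.pi * θ)) := by
  induction N with
  | zero => simp
  | succ n ih =>
    rw [Finset.sum_range_succ, ← add_assoc, add_mul, ih]
    have e1 : (2 * ((n + 1 : ℕ) : ℝ) + 1) * (Real.pi * θ)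
        = 2 * Real.pi * (n + 1) * θ + Real.pi * θ := by push_cast; ring
    have e2 : (2 * (n : ℝ) + 1) * (Real.pi * θ)
        = 2 * Real.pi * (n + 1) * θ - Real.pi * θ := by ring
    rw [e1, e2, Real.sin_add, Real.sin_sub]; ring

lemma P_nonneg (N : ℕ) (ε : ℝ) (hε : ε = 1 ∨ ε = -1) (θ : ℝ) (h0 : 0 < θ) (h1 : θ ≤ 1 / 2) :
    0 ≤ (1 + ε * Real.cos ((2 * N + 1) * (Real.pi * θ))) /
        ((2 * N + 1) * Real.pi * Real.sin (Real.pi * θ)) + ε * (θ - 1 / 2 + sinSum N θ) := by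
  have hpi := Real.pi_pos
  have hK : (0 : ℝ) < 2 * N + 1 := by positivity
  set P : ℝ → ℝ := fun θ => (1 + ε * Real.cos ((2 * N + 1) * (Real.pi * θ))) /
        ((2 * N + 1) * Real.pi * Real.sin (Real.pi * θ)) + ε * (θ - 1 / 2 + sinSum N θ) with hP
  have hsin : ∀ x ∈ Set.Icc θ (1 / 2), 0 < Real.sin (Real.pi * x) := by
    intro x hx
    apply Real.sin_pos_of_pos_of_lt_pi
    · have := hx.1; have : 0 < x := by linarith
      positivity
    · have := hx.2; nlinarith
  have hd : ∀ x ∈ Set.Icc θ (1 / 2), HasDerivAt P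
      (-(1 + ε * Real.cos ((2 * N + 1) * (Real.pi * x))) * Real.cos (Real.pi * x) /
        ((2 * N + 1) * Real.sin (Real.pi * x) ^ 2)) x := by
    intro x hx
    have hs := hsin x hx
    have a1 : HasDerivAt (fun x : ℝ => Real.pi * x) Real.pi x := by
      simpa using (hasDerivAt_id x).const_mul Real.pi
    have a2 : HasDerivAt (fun x : ℝ => (2 * (N : ℝ) + 1) * (Real.pi * x))
      ((2 * (N : ℝ) + 1) * Real.pi) x := a1.const_mul _
    have a3 := ((a2.cos.const_mul ε).const_add 1).div (a1.sin.const_mul ((2 * (N : ℝ) + 1) * Real.pi))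
      (by positivity)
    have a4 := (((hasDerivAt_id x).sub_const (1 / 2)).add (sinSum_deriv N x)).const_mul ε
    refine (a3.add a4).congr_deriv ?_
    have hD := dirichlet_id N x
    rw [← eq_div_iff hs.ne'] at hD
    rw [hD]
    field_simp
    ring
  have hanti : AntitoneOn P (Set.Icc θ (1 / 2)) := by
    apply antitoneOn_of_deriv_nonpos (convex_Icc _ _)
    · exact fun x hx => (hd x hx).continuousAt.continuousWithinAt
    · exact fun x hx => (hd x (interior_subset hx)).differentiableAt.differentiableWithinAt
    · intro x hx
      have hx := interior_subset hx
      rw [(hd x hx).deriv]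
      have hs := hsin x hx
      have hc : 0 ≤ Real.cos (Real.pi * x) := by
        apply Real.cos_nonneg_of_neg_pi_div_two_le_of_le
        · have := hx.1; have : 0 < x := by linarith
          have : 0 < Real.pi * x := by positivity
          linarith
        · have := hx.2; nlinarith
      apply div_nonpos_of_nonpos_of_nonneg _ (by positivity)
      have : 0 ≤ 1 + ε * Real.cos ((2 * N + 1) * (Real.pi * x)) := by
        have := Real.cos_le_one ((2 * N + 1) * (Real.pi * x))
        have := Real.neg_one_le_cos ((2 * N + 1) * (Real.pi * x))
        rcases hε with rfl | rfl <;> linarith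
      nlinarith
  have key := hanti (Set.left_mem_Icc.2 h1) (Set.right_mem_Icc.2 h1) h1
  refine le_trans ?_ key
  have hz : sinSum N (1 / 2) = 0 := by
    unfold sinSum
    refine Finset.sum_eq_zero fun h _ => ?_
    have : 2 * Real.pi * ((h : ℝ) + 1) * (1 / 2) = ((h + 1 : ℕ) : ℝ) * Real.pi := by
      push_cast; ring
    rw [this, Real.sin_nat_mul_pi, zero_div]
  have hs := hsin _ (Set.right_mem_Icc.2 h1)
  simp only [hP, hz]
  have : 0 ≤ 1 + ε * Real.cos ((2 * N + 1) * (Real.pi * (1 / 2))) := by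
    have := Real.cos_le_one ((2 * N + 1) * (Real.pi * (1 / 2)))
    have := Real.neg_one_le_cos ((2 * N + 1) * (Real.pi * (1 / 2)))
    rcases hε with rfl | rfl <;> linarith
  have : 0 ≤ (1 + ε * Real.cos ((2 * N + 1) * (Real.pi * (1 / 2)))) /
        ((2 * N + 1) * Real.pi * Real.sin (Real.pi * (1 / 2))) := by positivity
  linarith

lemma S_bound (N : ℕ) (θ : ℝ) (h0 : 0 < θ) (h1 : θ ≤ 1 / 2) :
    |θ - 1 / 2 + sinSum N θ| ≤ 1 / ((2 * N + 1) * θ) := by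
  have hpi := Real.pi_pos
  have p1 := P_nonneg N 1 (Or.inl rfl) θ h0 h1
  have p2 := P_nonneg N (-1) (Or.inr rfl) θ h0 h1
  have hs : 2 * θ ≤ Real.sin (Real.pi * θ) := by
    have := Real.mul_le_sin (x := Real.pi * θ) (by positivity) (by nlinarith)
    have e : 2 / Real.pi * (Real.pi * θ) = 2 * θ := by field_simp
    linarith
  have hsp : 0 < Real.sin (Real.pi * θ) := by linarith
  have hK : (0 : ℝ) < 2 * N + 1 := by positivity
  have hG : 2 / ((2 * N + 1) * Real.pi * Real.sin (Real.pi * θ)) ≤ 1 / ((2 * N + 1) * θ) := by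
    rw [div_le_div_iff₀ (by positivity) (by positivity)]
    have : 2 * θ ≤ Real.pi * Real.sin (Real.pi * θ) := by
      nlinarith [Real.pi_gt_three]
    nlinarith
  have b : ∀ ε : ℝ, ε * Real.cos ((2 * N + 1) * (Real.pi * θ)) ≤ 1 → 
      (1 + ε * Real.cos ((2 * N + 1) * (Real.pi * θ))) /
        ((2 * N + 1) * Real.pi * Real.sin (Real.pi * θ)) ≤ 1 / ((2 * N + 1) * θ) := by
    intro ε h
    refine le_trans ?_ hG
    gcongr
    linarith
  have b1 := b 1 (by linarith [Real.cos_le_one ((2 * N + 1) * (Real.pi * θ))])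
  have b2 := b (-1) (by linarith [Real.neg_one_le_cos ((2 * N + 1) * (Real.pi * θ))])
  rw [abs_le]
  constructor <;> linarith

lemma sinSum_le (N : ℕ) (θ : ℝ) (h0 : 0 ≤ θ) : |sinSum N θ| ≤ 2 * N * θ := by
  have hpi := Real.pi_pos
  unfold sinSum
  refine (Finset.abs_sum_le_sum_abs _ _).trans ?_
  have : ∀ h ∈ Finset.range N,
      |Real.sin (2 * Real.pi * (h + 1) * θ) / (Real.pi * (h + 1))| ≤ 2 * θ := by
    intro h _
    rw [abs_div, abs_of_pos (by positivity : 0 < Real.pi * ((h : ℝ) + 1)), div_le_iff₀ (by positivity)]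
    refine Real.abs_sin_le_abs.trans ?_
    rw [abs_of_nonneg (by positivity)]
    apply le_of_eq; ring
  refine (Finset.sum_le_sum this).trans ?_
  simp
  apply le_of_eq; ring

lemma complex_sum (N : ℕ) (θ : ℝ) :
    ∑ h ∈ (Finset.Icc (-(N : ℤ)) N).erase 0,
      eexp (θ * (h : ℝ)) / (2 * Real.pi * Complex.I * (h : ℝ)) = ((sinSum N θ : ℝ) : ℂ) := by
  induction N with
  | zero => simp [sinSum]
  | succ n ih =>
    have e : (Finset.Icc (-((n + 1 : ℕ) : ℤ)) ((n + 1 : ℕ) : ℤ)).erase 0 =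
        insert ((n : ℤ) + 1) (insert (-((n : ℤ) + 1)) ((Finset.Icc (-(n : ℤ)) n).erase 0)) := by
      ext x; simp only [Finset.mem_erase, Finset.mem_Icc, Finset.mem_insert]; push_cast; omega
    rw [e, Finset.sum_insert (by
      simp only [Finset.mem_erase, Finset.mem_Icc, Finset.mem_insert]; omega),
      Finset.sum_insert (by
      simp only [Finset.mem_erase, Finset.mem_Icc]; omega), ih]
    unfold sinSum
    rw [Finset.sum_range_succ]
    have hpi : (Real.pi : ℂ) ≠ 0 := by exact_mod_cast Real.pi_ne_zero
    have hn : (n : ℂ) + 1 ≠ 0 := by exact_mod_cast Nat.succ_ne_zero n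
    have e1 : eexp (θ * (((n : ℤ) + 1 : ℤ) : ℝ)) =
        Complex.exp ((2 * Real.pi * (n + 1) * θ) * Complex.I) := by
      unfold eexp; push_cast; congr 1; ring
    have e2 : eexp (θ * ((-((n : ℤ) + 1) : ℤ) : ℝ)) =
        Complex.exp (-(2 * Real.pi * (n + 1) * θ) * Complex.I) := by
      unfold eexp; push_cast; congr 1; ring
    rw [e1, e2]
    push_cast
    rw [Complex.sin]
    have hI := Complex.I_ne_zero
    have hI2 := Complex.I_sq
    field_simp
    ring_nf
    simp only [hI2]
    ring

lemma sinSum_neg (N : ℕ) (θ : ℝ) : sinSum N (-θ) = - sinSum N θ := by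
  unfold sinSum
  rw [← Finset.sum_neg_distrib]
  refine Finset.sum_congr rfl fun h _ => ?_
  rw [mul_neg, Real.sin_neg, neg_div]

lemma sinSum_sub_int (N : ℕ) (θ : ℝ) (m : ℤ) : sinSum N (θ - m) = sinSum N θ := by
  unfold sinSum
  refine Finset.sum_congr rfl fun h _ => ?_
  have : 2 * Real.pi * ((h : ℝ) + 1) * (θ - m) = 2 * Real.pi * (h + 1) * θ -
    (((h + 1) * m : ℤ) : ℝ) * (2 * Real.pi) := by push_cast; ring
  rw [this, Real.sin_sub_int_mul_two_pi]

lemma sawtooth_sub_int (θ : ℝ) (m : ℤ) : sawtooth (θ - m) = sawtooth θ := by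
  unfold sawtooth
  rw [Int.floor_sub_intCast]; push_cast; ring

lemma S_abs (N : ℕ) (t : ℝ) (ht : t ≠ 0) (h : |t| ≤ 1 / 2) :
    |sawtooth t + sinSum N t| = |(|t| - 1 / 2 + sinSum N (|t|))| := by
  rcases lt_or_gt_of_ne ht with h0 | h0
  · rw [abs_of_neg h0] at h ⊢
    have hf : ⌊t⌋ = -1 := by
      rw [Int.floor_eq_iff]; push_cast; constructor <;> linarith
    rw [sinSum_neg, sawtooth, hf, ← abs_neg]
    congr 1; push_cast; ring
  · rw [abs_of_pos h0] at h ⊢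
    have hf : ⌊t⌋ = 0 := by
      rw [Int.floor_eq_iff]; push_cast; constructor <;> linarith
    rw [sawtooth, hf]; simp

lemma part_one (H : ℝ) (hH : 1 ≤ H) (θ : ℝ) :
    ‖(sawtooth θ : ℂ) +
            ∑ h ∈ (Finset.Icc (-⌊H⌋) ⌊H⌋).erase 0,
              eexp (θ * (h : ℝ)) / (2 * Real.pi * Complex.I * (h : ℝ))‖ ≤
          3 * gFn θ H := by
  obtain ⟨N, hN⟩ : ∃ N : ℕ, ⌊H⌋ = N := ⟨⌊H⌋.toNat, by
    rw [Int.toNat_of_nonneg]; exact Int.floor_nonneg.2 (by linarith)⟩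
  have hN1 : (N : ℝ) ≤ H := by have := Int.floor_le H; rw [hN] at this; exact_mod_cast this
  have hN2 : H < N + 1 := by have := Int.lt_floor_add_one H; rw [hN] at this; exact_mod_cast this
  rw [hN, complex_sum, ← Complex.ofReal_add, Complex.norm_real, Real.norm_eq_abs]
  rw [← sinSum_sub_int N θ (round θ), ← sawtooth_sub_int θ (round θ)]
  unfold gFn distNearestInt
  have hr := abs_sub_round θ
  set t := θ - round θ with ht
  split_ifs with h
  · have h0 : t = 0 := abs_eq_zero.1 h
    rw [h0]
    simp [sawtooth, sinSum]
    norm_num [abs_of_pos]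
  · have htne : t ≠ 0 := fun h' => h (by simp [h'])
    rw [S_abs N t htne hr]
    have hd : 0 < |t| := abs_pos.2 htne
    generalize |t| = d at *
    rw [mul_min_of_nonneg _ _ (by norm_num)]
    have hHd : 0 < H * d := by positivity
    have b1 : |d - 1 / 2 + sinSum N d| ≤ 1 / (H * d) := by
      refine (S_bound N d hd hr).trans ?_
      have : (0 : ℝ) ≤ N := by positivity
      gcongr
      linarith
    apply le_min
    · rcases le_total (H * d) 1 with h2 | h2
      · have := sinSum_le N d hd.le
        have : N * d ≤ H * d := by gcongr
        rw [abs_le] at *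
        constructor <;> linarith
      · have : 1 / (H * d) ≤ 1 := by rw [div_le_one hHd]; exact h2
        linarith
    · have : 0 < 1 / (H * d) := by positivity
      linarith

noncomputable def gC (H : ℝ) : C(UnitAddCircle, ℂ) where
  toFun x := ((1 / max 1 (H * ‖x‖) : ℝ) : ℂ)
  continuous_toFun := by
    refine Complex.continuous_ofReal.comp ?_
    refine Continuous.div continuous_const (by fun_prop) ?_
    intro x
    have : (0 : ℝ) < max 1 (H * ‖x‖) := lt_max_of_lt_left one_pos
    exact this.ne'

lemma gC_coe (H : ℝ) (hH : 1 ≤ H) (θ : ℝ) :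
    gC H (θ : UnitAddCircle) = ((gFn θ H : ℝ) : ℂ) := by
  change ((1 / max 1 (H * ‖(θ : UnitAddCircle)‖) : ℝ) : ℂ) = _
  rw [UnitAddCircle.norm_eq]
  unfold gFn distNearestInt
  congr 1
  split_ifs with h
  · rw [h]; simp
  · have hd : 0 < |θ - round θ| := lt_of_le_of_ne (abs_nonneg _) (Ne.symm h)
    have hHd : 0 < H * |θ - round θ| := by positivity
    rcases le_total (H * |θ - round θ|) 1 with h2 | h2
    · rw [max_eq_left h2, min_eq_left (by rw [le_div_iff₀ hHd]; linarith)]; norm_num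
    · rw [max_eq_right h2, min_eq_right (by rw [div_le_iff₀ hHd]; linarith)]

noncomputable def J (H : ℝ) (n : ℤ) : ℝ :=
  ∫ x in (0 : ℝ)..(1 / 2), Real.cos (2 * Real.pi * n * x) / max 1 (H * x)

lemma coeff_eq (H : ℝ) (n : ℤ) :
    fourierCoeff (gC H) n = ((2 * J H n : ℝ) : ℂ) := by
  rw [fourierCoeff_eq_intervalIntegral (gC H) n (-(1 / 2))]
  have e0 : (-(1 / 2) + 1 : ℝ) = 1 / 2 := by norm_num
  rw [e0]
  have hc : Continuous fun x : ℝ => (fourier (-n) (x : UnitAddCircle) : ℂ) • gC H (x : UnitAddCircle) := by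
    have : Continuous fun z : UnitAddCircle => (fourier (-n) z : ℂ) • gC H z := by fun_prop
    exact this.comp (AddCircle.continuous_mk' 1)
  set F : ℝ → ℂ := fun x : ℝ => (fourier (-n) (x : UnitAddCircle) : ℂ) • gC H (x : UnitAddCircle)
    with hF
  have h1 : ∫ x in (-(1 / 2) : ℝ)..(1 / 2), F x =
      ∫ x in (0 : ℝ)..(1 / 2), (F (-x) + F x) := by
    rw [intervalIntegral.integral_add
      (f := fun x => F (-x)) ((hc.comp continuous_neg).intervalIntegrable _ _) (hc.intervalIntegrable _ _)]
    rw [intervalIntegral.integral_comp_neg, neg_zero]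
    rw [intervalIntegral.integral_add_adjacent_intervals
      (hc.intervalIntegrable _ _) (hc.intervalIntegrable _ _)]
  have h2 : ∫ x in (0 : ℝ)..(1 / 2), (F (-x) + F x) =
      ∫ x in (0 : ℝ)..(1 / 2),
        ((2 * (Real.cos (2 * Real.pi * n * x) / max 1 (H * x)) : ℝ) : ℂ) := by
    apply intervalIntegral.integral_congr
    intro x hx
    rw [Set.uIcc_of_le (by norm_num)] at hx
    have hn1 : ‖(x : UnitAddCircle)‖ = x := by
      have := (AddCircle.norm_coe_eq_abs_iff (p := 1) (x := x) one_ne_zero).2 (by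
        rw [abs_of_nonneg hx.1]; simpa using hx.2)
      rw [this, abs_of_nonneg hx.1]
    have hn2 : ‖((-x : ℝ) : UnitAddCircle)‖ = x := by
      rw [AddCircle.coe_neg, norm_neg, hn1]
    have g1 : gC H (x : UnitAddCircle) = ((1 / max 1 (H * x) : ℝ) : ℂ) := by
      change ((1 / max 1 (H * ‖(x : UnitAddCircle)‖) : ℝ) : ℂ) = _
      rw [hn1]
    have g2 : gC H ((-x : ℝ) : UnitAddCircle) = ((1 / max 1 (H * x) : ℝ) : ℂ) := by
      change ((1 / max 1 (H * ‖((-x : ℝ) : UnitAddCircle)‖) : ℝ) : ℂ) = _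
      rw [hn2]
    simp only [hF, g1, g2, fourier_coe_apply, smul_eq_mul]
    rw [← add_mul]
    have e1 : Complex.exp (2 * Real.pi * Complex.I * ((-n : ℤ) : ℂ) * ((-x : ℝ) : ℂ) / ((1 : ℝ) : ℂ)) =
      Complex.exp ((2 * Real.pi * n * x) * Complex.I) := by
      congr 1; push_cast; ring
    have e2 : Complex.exp (2 * Real.pi * Complex.I * ((-n : ℤ) : ℂ) * ((x : ℝ) : ℂ) / ((1 : ℝ) : ℂ)) =
      Complex.exp (-(2 * Real.pi * n * x) * Complex.I) := by
      congr 1; push_cast; ring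
    rw [e1, e2]
    push_cast
    rw [Complex.cos]
    ring
  rw [h1, h2, intervalIntegral.integral_ofReal, intervalIntegral.integral_const_mul]
  simp [J]

lemma J_cont (H : ℝ) (w : ℝ) : Continuous fun x : ℝ => Real.cos (w * x) / max 1 (H * x) := by
  refine Continuous.div (by fun_prop) (by fun_prop) ?_
  intro x
  have : (0 : ℝ) < max 1 (H * x) := lt_max_of_lt_left one_pos
  exact this.ne'

lemma J_split (H : ℝ) (hH : 2 ≤ H) (n : ℤ) :
    J H n = (∫ x in (0 : ℝ)..(1 / H), Real.cos (2 * Real.pi * n * x)) +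
      ∫ x in (1 / H)..(1 / 2), Real.cos (2 * Real.pi * n * x) / (H * x) := by
  have hH0 : 0 < H := by linarith
  have hle : 1 / H ≤ 1 / 2 := by gcongr
  unfold J
  rw [← intervalIntegral.integral_add_adjacent_intervals (b := 1 / H)
    ((J_cont H _).intervalIntegrable _ _) ((J_cont H _).intervalIntegrable _ _)]
  congr 1
  · apply intervalIntegral.integral_congr
    intro x hx
    rw [Set.uIcc_of_le (by positivity)] at hx
    have : H * x ≤ 1 := by have := hx.2; rw [le_div_iff₀ hH0] at this; linarith
    simp only [max_eq_left this, div_one]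
  · apply intervalIntegral.integral_congr
    intro x hx
    rw [Set.uIcc_of_le hle] at hx
    have : 1 ≤ H * x := by have := hx.1; rw [div_le_iff₀ hH0] at this; linarith
    simp only [max_eq_right this]

lemma J_log (H : ℝ) (hH : 2 ≤ H) (n : ℤ) : |J H n| ≤ Real.log (2 * H) / H := by
  have hH0 : 0 < H := by linarith
  have hle : 1 / H ≤ 1 / 2 := by gcongr
  have hpos : ∀ x ∈ Set.uIcc (1 / H) (1 / 2), 0 < x := by
    intro x hx
    rw [Set.uIcc_of_le hle] at hx
    have : 0 < 1 / H := by positivity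
    linarith [hx.1]
  rw [J_split H hH]
  have b1 : |∫ x in (0 : ℝ)..(1 / H), Real.cos (2 * Real.pi * n * x)| ≤ 1 / H := by
    have := intervalIntegral.norm_integral_le_of_norm_le_const (a := 0) (b := 1 / H) (C := 1)
      (f := fun x : ℝ => Real.cos (2 * Real.pi * n * x)) (fun x _ => Real.abs_cos_le_one _)
    rw [Real.norm_eq_abs, sub_zero, abs_of_pos (by positivity : 0 < 1 / H), one_mul] at this
    exact this
  have b2 : |∫ x in (1 / H)..(1 / 2), Real.cos (2 * Real.pi * n * x) / (H * x)| ≤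
      Real.log (H / 2) / H := by
    have hi : IntervalIntegrable (fun x : ℝ => H⁻¹ * x⁻¹) MeasureTheory.volume (1 / H) (1 / 2) := by
      apply ContinuousOn.intervalIntegrable
      exact continuousOn_const.mul (continuousOn_id.inv₀ fun x hx => (hpos x hx).ne')
    have := intervalIntegral.norm_integral_le_of_norm_le (a := 1 / H) (b := 1 / 2)
      (f := fun x : ℝ => Real.cos (2 * Real.pi * n * x) / (H * x))
      (g := fun x : ℝ => H⁻¹ * x⁻¹) hle (by
        refine Filter.Eventually.of_forall fun x hx => ?_
        have hx0 : 0 < x := hpos x (by rw [Set.uIcc_of_le hle]; exact Set.Ioc_subset_Icc_self hx)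
        rw [Real.norm_eq_abs, abs_div, abs_of_pos (by positivity : 0 < H * x), ← mul_inv, ← one_div]
        gcongr
        exact Real.abs_cos_le_one _) hi
    rw [intervalIntegral.integral_const_mul, integral_inv_of_pos (by positivity) (by norm_num)] at this
    rw [Real.norm_eq_abs] at this
    refine this.trans (le_of_eq ?_)
    rw [show (1 / 2 : ℝ) / (1 / H) = H / 2 by field_simp]
    ring
  refine (abs_add_le _ _).trans ((add_le_add b1 b2).trans ?_)
  rw [← add_div]
  gcongr
  rw [show 2 * H = (H / 2) * 4 by ring, Real.log_mul (by positivity) (by norm_num)]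
  have : Real.log 4 = 2 * Real.log 2 := by
    rw [show (4 : ℝ) = 2 ^ 2 by norm_num, Real.log_pow]; norm_num
  linarith [Real.log_two_gt_d9]

lemma J_parts (H : ℝ) (hH : 2 ≤ H) (n : ℤ) (hn : n ≠ 0) :
    J H n = (1 / (2 * Real.pi * n * H)) *
      ∫ x in (1 / H)..(1 / 2), Real.sin (2 * Real.pi * n * x) / x ^ 2 := by
  have hH0 : 0 < H := by linarith
  have hle : 1 / H ≤ 1 / 2 := by gcongr
  have hpos : ∀ x ∈ Set.uIcc (1 / H) (1 / 2), 0 < x := by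
    intro x hx
    rw [Set.uIcc_of_le hle] at hx
    have : 0 < 1 / H := by positivity
    linarith [hx.1]
  rw [J_split H hH]
  have hw : 2 * Real.pi * (n : ℝ) ≠ 0 := by
    have : (n : ℝ) ≠ 0 := by exact_mod_cast hn
    have := Real.pi_ne_zero
    positivity
  have hwhalf : Real.sin (2 * Real.pi * n * (1 / 2)) = 0 := by
    rw [show 2 * Real.pi * (n : ℝ) * (1 / 2) = n * Real.pi by ring, Real.sin_int_mul_pi]
  set w := 2 * Real.pi * (n : ℝ) with hwdef
  have a1 : ∀ x : ℝ, HasDerivAt (fun x : ℝ => w * x) w x := fun x => by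
    simpa using (hasDerivAt_id x).const_mul w
  have i1 : ∫ x in (0 : ℝ)..(1 / H), Real.cos (w * x) = Real.sin (w * (1 / H)) / w := by
    rw [intervalIntegral.integral_eq_sub_of_hasDerivAt (f := fun x => Real.sin (w * x) / w)]
    · simp
    · intro x _
      refine ((a1 x).sin.div_const w).congr_deriv ?_
      field_simp
    · exact Continuous.intervalIntegrable (by fun_prop) _ _
  have c1 : IntervalIntegrable (fun x : ℝ => Real.cos (w * x) / (H * x)) MeasureTheory.volume
      (1 / H) (1 / 2) := by
    apply ContinuousOn.intervalIntegrable
    refine ContinuousOn.div (by fun_prop) (by fun_prop) fun x hx => ?_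
    have := hpos x hx
    positivity
  have c2 : IntervalIntegrable (fun x : ℝ => (1 / (w * H)) * (Real.sin (w * x) / x ^ 2))
      MeasureTheory.volume (1 / H) (1 / 2) := by
    apply ContinuousOn.intervalIntegrable
    refine continuousOn_const.mul (ContinuousOn.div (by fun_prop) (by fun_prop) fun x hx => ?_)
    have := hpos x hx
    positivity
  have i2 := intervalIntegral.integral_eq_sub_of_hasDerivAt (a := 1 / H) (b := 1 / 2)
    (f := fun x : ℝ => Real.sin (w * x) / (w * H * x))
    (f' := fun x : ℝ => Real.cos (w * x) / (H * x) - (1 / (w * H)) * (Real.sin (w * x) / x ^ 2))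
    (by
      intro x hx
      have hx0 := hpos x hx
      have a2 : HasDerivAt (fun x : ℝ => w * H * x) (w * H) x := by
        simpa using (hasDerivAt_id x).const_mul (w * H)
      refine ((a1 x).sin.div a2 (by positivity)).congr_deriv ?_
      field_simp) (c1.sub c2)
  rw [intervalIntegral.integral_sub c1 c2, intervalIntegral.integral_const_mul, hwhalf] at i2
  rw [i1]
  have : Real.sin (w * (1 / H)) / (w * H * (1 / H)) = Real.sin (w * (1 / H)) / w := by
    congr 1; field_simp
  rw [this] at i2
  simp only [zero_div] at i2
  linarith

lemma sinInt_le (H : ℝ) (hH : 2 ≤ H) (w : ℝ) :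
    |∫ x in (1 / H)..(1 / 2), Real.sin (w * x) / x ^ 2| ≤ H := by
  have hH0 : 0 < H := by linarith
  have hle : 1 / H ≤ 1 / 2 := by gcongr
  have hpos : ∀ x ∈ Set.uIcc (1 / H) (1 / 2), 0 < x := by
    intro x hx
    rw [Set.uIcc_of_le hle] at hx
    have : 0 < 1 / H := by positivity
    linarith [hx.1]
  have hi : IntervalIntegrable (fun x : ℝ => 1 / x ^ 2) MeasureTheory.volume (1 / H) (1 / 2) := by
    apply ContinuousOn.intervalIntegrable
    refine ContinuousOn.div (by fun_prop) (by fun_prop) fun x hx => ?_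
    have := hpos x hx
    positivity
  have := intervalIntegral.norm_integral_le_of_norm_le (a := 1 / H) (b := 1 / 2)
    (f := fun x : ℝ => Real.sin (w * x) / x ^ 2)
    (g := fun x : ℝ => 1 / x ^ 2) hle (by
      refine Filter.Eventually.of_forall fun x hx => ?_
      have hx0 : 0 < x := hpos x (by rw [Set.uIcc_of_le hle]; exact Set.Ioc_subset_Icc_self hx)
      rw [Real.norm_eq_abs, abs_div, abs_of_pos (by positivity : 0 < x ^ 2)]
      gcongr
      exact Real.abs_sin_le_one _) hi
  rw [Real.norm_eq_abs, intervalIntegral.integral_eq_sub_of_hasDerivAt (f := fun x : ℝ => -x⁻¹)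
    (by
      intro x hx
      have hx0 := hpos x hx
      refine (hasDerivAt_inv hx0.ne').neg.congr_deriv ?_
      field_simp) hi] at this
  refine this.trans ?_
  simp

lemma sinInt_le2 (H : ℝ) (hH : 2 ≤ H) (w : ℝ) (hw : w ≠ 0) :
    |∫ x in (1 / H)..(1 / 2), Real.sin (w * x) / x ^ 2| ≤ 2 * H ^ 2 / |w| := by
  have hH0 : 0 < H := by linarith
  have hle : 1 / H ≤ 1 / 2 := by gcongr
  have hpos : ∀ x ∈ Set.uIcc (1 / H) (1 / 2), 0 < x := by
    intro x hx
    rw [Set.uIcc_of_le hle] at hx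
    have : 0 < 1 / H := by positivity
    linarith [hx.1]
  have a1 : ∀ x : ℝ, HasDerivAt (fun x : ℝ => w * x) w x := fun x => by
    simpa using (hasDerivAt_id x).const_mul w
  have hi : IntervalIntegrable (fun x : ℝ => 2 / x ^ 3) MeasureTheory.volume (1 / H) (1 / 2) := by
    apply ContinuousOn.intervalIntegrable
    refine ContinuousOn.div (by fun_prop) (by fun_prop) fun x hx => ?_
    have := hpos x hx
    positivity
  have hi3 : IntervalIntegrable (fun x : ℝ => 2 * Real.cos (w * x) / x ^ 3)
      MeasureTheory.volume (1 / H) (1 / 2) := by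
    apply ContinuousOn.intervalIntegrable
    refine ContinuousOn.div (by fun_prop) (by fun_prop) fun x hx => ?_
    have := hpos x hx
    positivity
  have hi2 : IntervalIntegrable (fun x : ℝ => w * (Real.sin (w * x) / x ^ 2))
      MeasureTheory.volume (1 / H) (1 / 2) := by
    apply ContinuousOn.intervalIntegrable
    refine continuousOn_const.mul (ContinuousOn.div (by fun_prop) (by fun_prop) fun x hx => ?_)
    have := hpos x hx
    positivity
  have b := intervalIntegral.norm_integral_le_of_norm_le (a := 1 / H) (b := 1 / 2)
    (f := fun x : ℝ => 2 * Real.cos (w * x) / x ^ 3)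
    (g := fun x : ℝ => 2 / x ^ 3) hle (by
      refine Filter.Eventually.of_forall fun x hx => ?_
      have hx0 : 0 < x := hpos x (by rw [Set.uIcc_of_le hle]; exact Set.Ioc_subset_Icc_self hx)
      rw [Real.norm_eq_abs, abs_div, abs_of_pos (by positivity : 0 < x ^ 3), abs_mul, abs_two]
      gcongr
      linarith [Real.abs_cos_le_one (w * x)]) hi
  have a2 : ∀ x ∈ Set.uIcc (1 / H) (1 / 2), HasDerivAt (fun x : ℝ => x ^ 2) (2 * x) x := by
    intro x _; simpa using hasDerivAt_pow 2 x
  rw [Real.norm_eq_abs, intervalIntegral.integral_eq_sub_of_hasDerivAt (f := fun x : ℝ => -(x ^ 2)⁻¹)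
    (by
      intro x hx
      have hx0 := hpos x hx
      refine ((a2 x hx).inv (by positivity)).neg.congr_deriv ?_
      field_simp) hi] at b
  have i2 := intervalIntegral.integral_eq_sub_of_hasDerivAt (a := 1 / H) (b := 1 / 2)
    (f := fun x : ℝ => -(Real.cos (w * x) / x ^ 2))
    (f' := fun x : ℝ => w * (Real.sin (w * x) / x ^ 2) + 2 * Real.cos (w * x) / x ^ 3)
    (by
      intro x hx
      have hx0 := hpos x hx
      refine ((a1 x).cos.div (a2 x hx) (by positivity)).neg.congr_deriv ?_
      field_simp
      ring) (hi2.add hi3)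
  rw [intervalIntegral.integral_add hi2 hi3, intervalIntegral.integral_const_mul] at i2
  rw [le_div_iff₀ (abs_pos.2 hw), ← abs_mul]
  have c1 := Real.abs_cos_le_one (w * (1 / 2))
  have c2 := Real.abs_cos_le_one (w * (1 / H))
  have e2 : Real.cos (w * (1 / H)) / (1 / H) ^ 2 = Real.cos (w * (1 / H)) * H ^ 2 := by
    field_simp
  have e3 : Real.cos (w * (1 / 2)) / (1 / 2) ^ 2 = Real.cos (w * (1 / 2)) * 4 := by ring
  have e4 : (((1 : ℝ) / 2) ^ 2)⁻¹ = 4 := by norm_num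
  have e5 : ((1 / H) ^ 2)⁻¹ = H ^ 2 := by field_simp
  rw [e2, e3] at i2
  rw [e4, e5] at b
  have c3 : |Real.cos (w * (1 / H)) * H ^ 2| ≤ H ^ 2 := by
    rw [abs_mul, abs_of_pos (by positivity : 0 < H ^ 2)]
    nlinarith [sq_nonneg H]
  rw [abs_le] at *
  constructor <;> linarith

lemma coeff_bound (H : ℝ) (hH : 2 ≤ H) (n : ℤ) (hn : n ≠ 0) :
    |2 * J H n| ≤ 4 * min (Real.log (2 * H) / H)
            (min (1 / |(n : ℝ)|) (H / (n : ℝ) ^ 2)) := by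
  have hH0 : 0 < H := by linarith
  have hn' : (n : ℝ) ≠ 0 := by exact_mod_cast hn
  have hna : 0 < |(n : ℝ)| := abs_pos.2 hn'
  have hpi := Real.pi_gt_three
  have hpi0 := Real.pi_pos
  have hw : 2 * Real.pi * (n : ℝ) ≠ 0 := by positivity
  have hwa : |2 * Real.pi * (n : ℝ)| = 2 * Real.pi * |(n : ℝ)| := by
    rw [abs_mul, abs_of_pos (by positivity : 0 < 2 * Real.pi)]
  have hJ : |2 * J H n| = 2 * |J H n| := by rw [abs_mul, abs_two]
  have hp := J_parts H hH n hn
  have hJ2 : |J H n| = 1 / (2 * Real.pi * |(n : ℝ)| * H) *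
      |∫ x in (1 / H)..(1 / 2), Real.sin (2 * Real.pi * n * x) / x ^ 2| := by
    rw [hp, abs_mul, abs_div, abs_one, abs_mul, hwa, abs_of_pos hH0]
  rw [mul_min_of_nonneg _ _ (by norm_num), mul_min_of_nonneg _ _ (by norm_num)]
  refine le_min ?_ (le_min ?_ ?_)
  · have := J_log H hH n
    have h0 : 0 ≤ |J H n| := abs_nonneg _
    linarith
  · rw [hJ, hJ2]
    have := sinInt_le H hH (2 * Real.pi * n)
    calc 2 * (1 / (2 * Real.pi * |(n : ℝ)| * H) *
      |∫ x in (1 / H)..(1 / 2), Real.sin (2 * Real.pi * n * x) / x ^ 2|)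
        ≤ 2 * (1 / (2 * Real.pi * |(n : ℝ)| * H) * H) := by gcongr
      _ = (1 / Real.pi) * (1 / |(n : ℝ)|) := by field_simp
      _ ≤ 4 * (1 / |(n : ℝ)|) := by
        gcongr
        rw [div_le_iff₀ hpi0]; linarith
  · rw [hJ, hJ2]
    have := sinInt_le2 H hH (2 * Real.pi * n) hw
    rw [hwa] at this
    rw [← sq_abs (n : ℝ)]
    calc 2 * (1 / (2 * Real.pi * |(n : ℝ)| * H) *
      |∫ x in (1 / H)..(1 / 2), Real.sin (2 * Real.pi * n * x) / x ^ 2|)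
        ≤ 2 * (1 / (2 * Real.pi * |(n : ℝ)| * H) * (2 * H ^ 2 / (2 * Real.pi * |(n : ℝ)|))) := by
          gcongr
      _ = (1 / Real.pi ^ 2) * (H / |(n : ℝ)| ^ 2) := by field_simp
      _ ≤ 4 * (H / |(n : ℝ)| ^ 2) := by
        gcongr
        rw [div_le_iff₀ (by positivity)]; nlinarith

lemma part_two (H : ℝ) (hH : 1 ≤ H) : ∃ a : ℤ → ℂ,
        (∀ θ : ℝ, HasSum (fun h : ℤ => a h * eexp (θ * (h : ℝ))) ((gFn θ H : ℝ) : ℂ)) ∧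
        (∀ h : ℤ, h ≠ 0 →
          ‖a h‖ ≤ 4 * min (Real.log (2 * H) / H)
            (min (1 / |(h : ℝ)|) (H / (h : ℝ) ^ 2))) ∧
        ‖a 0‖ ≤ 4 * (Real.log (2 * H) / H) := by
  have hH0 : 0 < H := by linarith
  rcases lt_or_ge H 2 with h2 | h2
  · have hlog : Real.log 2 ≤ Real.log (2 * H) := Real.log_le_log (by norm_num) (by linarith)
    have hl2 := Real.log_two_gt_d9
    refine ⟨fun h => if h = 0 then 1 else 0, ?_, ?_, ?_⟩
    · intro θ
      have hg : gFn θ H = 1 := by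
        unfold gFn
        split_ifs with h
        · rfl
        · apply min_eq_left
          unfold distNearestInt at *
          have := abs_sub_round θ
          have hd : 0 < |θ - round θ| := lt_of_le_of_ne (abs_nonneg _) (Ne.symm h)
          rw [le_div_iff₀ (by positivity)]
          nlinarith
      rw [hg]
      convert hasSum_single (0 : ℤ) (f := fun h : ℤ => (if h = 0 then (1 : ℂ) else 0) *
        eexp (θ * (h : ℝ))) ?_ using 1
      · simp [eexp]
      · intro b hb; simp [hb]
    · intro h hh
      simp only [hh, if_false, norm_zero]
      have : 0 ≤ Real.log (2 * H) := by linarith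
      positivity
    · simp only [if_true, norm_one]
      rw [← mul_div_assoc, le_div_iff₀ hH0]
      linarith
  · have hb : ∀ h : ℤ, h ≠ 0 → ‖fourierCoeff (gC H) h‖ ≤ 4 * min (Real.log (2 * H) / H)
            (min (1 / |(h : ℝ)|) (H / (h : ℝ) ^ 2)) := by
      intro h hh
      rw [coeff_eq, Complex.norm_real, Real.norm_eq_abs]
      exact coeff_bound H h2 h hh
    have hsum : Summable (fourierCoeff (gC H)) := by
      have hs : Summable fun h : ℤ => 4 * H * (1 / (h : ℝ) ^ 2) :=
        (Real.summable_one_div_int_pow.2 one_lt_two).mul_left _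
      refine Summable.of_norm_bounded_eventually hs ?_
      have : ∀ᶠ h : ℤ in Filter.cofinite, h ≠ 0 := by
        simpa using (Set.finite_singleton (0 : ℤ)).eventually_cofinite_notMem
      filter_upwards [this] with h hh
      refine (hb h hh).trans ?_
      have : min (Real.log (2 * H) / H) (min (1 / |(h : ℝ)|) (H / (h : ℝ) ^ 2)) ≤
        H / (h : ℝ) ^ 2 := (min_le_right _ _).trans (min_le_right _ _)
      calc _ ≤ 4 * (H / (h : ℝ) ^ 2) := by gcongr
        _ = _ := by ring
    refine ⟨fourierCoeff (gC H), ?_, hb, ?_⟩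
    · intro θ
      have := has_pointwise_sum_fourier_series_of_summable hsum (θ : UnitAddCircle)
      rw [gC_coe H hH] at this
      convert this using 2 with h
      rw [fourier_coe_apply, smul_eq_mul, eexp]
      congr 2
      push_cast
      ring
    · rw [coeff_eq, Complex.norm_real, Real.norm_eq_abs, abs_mul, abs_two]
      have := J_log H h2 0
      have : 0 ≤ |J H 0| := abs_nonneg _
      linarith

theorem sawtooth_truncated_fourier :
    ∃ C > (0 : ℝ), ∃ C' > (0 : ℝ),
      (∀ H : ℝ, 1 ≤ H → ∀ θ : ℝ,
        ‖(sawtooth θ : ℂ) +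
            ∑ h ∈ (Finset.Icc (-⌊H⌋) ⌊H⌋).erase 0,
              eexp (θ * (h : ℝ)) / (2 * Real.pi * Complex.I * (h : ℝ))‖ ≤
          C * gFn θ H) ∧
      (∀ H : ℝ, 1 ≤ H → ∃ a : ℤ → ℂ,
        (∀ θ : ℝ, HasSum (fun h : ℤ => a h * eexp (θ * (h : ℝ))) ((gFn θ H : ℝ) : ℂ)) ∧
        (∀ h : ℤ, h ≠ 0 →
          ‖a h‖ ≤ C' * min (Real.log (2 * H) / H)
            (min (1 / |(h : ℝ)|) (H / (h : ℝ) ^ 2))) ∧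
        ‖a 0‖ ≤ C' * (Real.log (2 * H) / H)) := by
  exact ⟨3, by norm_num, 4, by norm_num, part_one, part_two⟩
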